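/- Under the adapted pure-frontal setup with focal data, assume κ_t(0) ≠ 0, that 0 is a singular point of the focal surface C_j ((V_jρ_j)(0) = 0), that this singular point is non-degenerate (the gradient of V_jρ_j at 0 is nonzero), and that (V_jκ_j)(0) = 0. Then 0 is an at least second order V_j-ridge point of f, i.e. (V_jV_jκ_j)(0) = 0, if and only if ∂_v(V_jρ_j)(0) = 0, which is equivalent to saying that the tangent direction at 0 of the singular curve {V_jρ_j = 0} of C_j is parallel to the null direction ∂_v, i.e. 0 is a singular point of the second kind of C_j (otherwise it is of the first kind). -/

import Mathlib

open Filter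

noncomputable section

/-- Vectors in ℝ³, modeled as `Fin 3 → ℝ`. -/
abbrev R3 : Type := Fin 3 → ℝ

/-- The Euclidean inner product on ℝ³. -/
def dot3 (a b : R3) : ℝ := a 0 * b 0 + a 1 * b 1 + a 2 * b 2

/-- The Euclidean norm on ℝ³. -/
def norm3 (a : R3) : ℝ := Real.sqrt (dot3 a a)

/-- Partial derivative in the `u`-direction. -/
def pu {E : Type*} [NormedAddCommGroup E] [NormedSpace ℝ E] (F : ℝ × ℝ → E) (p : ℝ × ℝ) : E :=
  fderiv ℝ F p (1, 0)

/-- Partial derivative in the `v`-direction. -/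
def pv {E : Type*} [NormedAddCommGroup E] [NormedSpace ℝ E] (F : ℝ × ℝ → E) (p : ℝ × ℝ) : E :=
  fderiv ℝ F p (0, 1)

/-- The adapted pure-frontal setup: `f` is a frontal with unit normal `ν`,
`f_v = v·h`, `ν_v = v·ν₁`, the frame `{f_u, h, ν}` is linearly independent everywhere
and orthonormal along the `u`-axis. -/
structure AdaptedPureFrontal (f ν h ν₁ : ℝ × ℝ → R3) : Prop where
  smooth_f : ContDiff ℝ (⊤ : ℕ∞) f
  smooth_ν : ContDiff ℝ (⊤ : ℕ∞) ν
  smooth_h : ContDiff ℝ (⊤ : ℕ∞) h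
  smooth_ν₁ : ContDiff ℝ (⊤ : ℕ∞) ν₁
  unit_ν : ∀ p, dot3 (ν p) (ν p) = 1
  orth_fu_ν : ∀ p, dot3 (pu f p) (ν p) = 0
  orth_fv_ν : ∀ p, dot3 (pv f p) (ν p) = 0
  fv_eq : ∀ p : ℝ × ℝ, pv f p = p.2 • h p
  νv_eq : ∀ p : ℝ × ℝ, pv ν p = p.2 • ν₁ p
  indep : ∀ p, LinearIndependent ℝ ![pu f p, h p, ν p]
  adapted_fu : ∀ u : ℝ, dot3 (pu f (u, 0)) (pu f (u, 0)) = 1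
  adapted_h : ∀ u : ℝ, dot3 (h (u, 0)) (h (u, 0)) = 1
  adapted_fu_h : ∀ u : ℝ, dot3 (pu f (u, 0)) (h (u, 0)) = 0
  adapted_h_ν : ∀ u : ℝ, dot3 (h (u, 0)) (ν (u, 0)) = 0

/-- Ẽ = ⟨f_u, f_u⟩. -/
def Et (f : ℝ × ℝ → R3) (p : ℝ × ℝ) : ℝ := dot3 (pu f p) (pu f p)

/-- F̃ = ⟨f_u, h⟩. -/
def Ft (f h : ℝ × ℝ → R3) (p : ℝ × ℝ) : ℝ := dot3 (pu f p) (h p)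

/-- G̃ = ⟨h, h⟩. -/
def Gt (h : ℝ × ℝ → R3) (p : ℝ × ℝ) : ℝ := dot3 (h p) (h p)

/-- L̃ = −⟨f_u, ν_u⟩. -/
def Lt (f ν : ℝ × ℝ → R3) (p : ℝ × ℝ) : ℝ := -dot3 (pu f p) (pu ν p)

/-- M̃ = −⟨h, ν_u⟩. -/
def Mt (h ν : ℝ × ℝ → R3) (p : ℝ × ℝ) : ℝ := -dot3 (h p) (pu ν p)

/-- Ñ₁ = −⟨h, ν₁⟩. -/
def Nt1 (h ν₁ : ℝ × ℝ → R3) (p : ℝ × ℝ) : ℝ := -dot3 (h p) (ν₁ p)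

/-- The Gaussian curvature K = (L̃Ñ₁ − M̃²)/(ẼG̃ − F̃²). -/
def Kg (f ν h ν₁ : ℝ × ℝ → R3) (p : ℝ × ℝ) : ℝ :=
  (Lt f ν p * Nt1 h ν₁ p - Mt h ν p ^ 2) / (Et f p * Gt h p - Ft f h p ^ 2)

/-- The mean curvature H = (ẼÑ₁ − 2F̃M̃ + G̃L̃)/(2(ẼG̃ − F̃²)). -/
def Hm (f ν h ν₁ : ℝ × ℝ → R3) (p : ℝ × ℝ) : ℝ :=
  (Et f p * Nt1 h ν₁ p - 2 * Ft f h p * Mt h ν p + Gt h p * Lt f ν p) /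
    (2 * (Et f p * Gt h p - Ft f h p ^ 2))

/-- The principal curvature κ = H + ε√(H² − K); `ε = 1` gives κ₁ and `ε = -1` gives κ₂. -/
def kap (f ν h ν₁ : ℝ × ℝ → R3) (ε : ℝ) (p : ℝ × ℝ) : ℝ :=
  Hm f ν h ν₁ p + ε * Real.sqrt (Hm f ν h ν₁ p ^ 2 - Kg f ν h ν₁ p)

/-- First component of the principal vector field V = −v(M̃ − κF̃)∂_u + (L̃ − κẼ)∂_v. -/
def V1c (f ν h ν₁ : ℝ × ℝ → R3) (ε : ℝ) (p : ℝ × ℝ) : ℝ :=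
  -(p.2 * (Mt h ν p - kap f ν h ν₁ ε p * Ft f h p))

/-- Second component of the principal vector field V = −v(M̃ − κF̃)∂_u + (L̃ − κẼ)∂_v. -/
def V2c (f ν h ν₁ : ℝ × ℝ → R3) (ε : ℝ) (p : ℝ × ℝ) : ℝ :=
  Lt f ν p - kap f ν h ν₁ ε p * Et f p

/-- Directional derivative of `g` along the principal vector field V. -/
def VD (f ν h ν₁ : ℝ × ℝ → R3) (ε : ℝ) {E : Type*} [NormedAddCommGroup E] [NormedSpace ℝ E]
    (g : ℝ × ℝ → E) (p : ℝ × ℝ) : E :=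
  V1c f ν h ν₁ ε p • pu g p + V2c f ν h ν₁ ε p • pv g p

/-- The radius of principal curvature ρ = 1/κ. -/
def rho (f ν h ν₁ : ℝ × ℝ → R3) (ε : ℝ) (p : ℝ × ℝ) : ℝ := (kap f ν h ν₁ ε p)⁻¹

/-- The focal surface C = f + ρ·ν. -/
def Cf (f ν h ν₁ : ℝ × ℝ → R3) (ε : ℝ) (p : ℝ × ℝ) : R3 :=
  f p + rho f ν h ν₁ ε p • ν p

/-- The normal direction x = −(M̃ − κF̃)·f_u + (L̃ − κẼ)·h of the focal surface. -/
def xj (f ν h ν₁ : ℝ × ℝ → R3) (ε : ℝ) (p : ℝ × ℝ) : R3 :=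
  (-(Mt h ν p - kap f ν h ν₁ ε p * Ft f h p)) • pu f p +
    (Lt f ν p - kap f ν h ν₁ ε p * Et f p) • h p

/-- The unit normal e = x/‖x‖ of the focal surface. -/
def ej (f ν h ν₁ : ℝ × ℝ → R3) (ε : ℝ) (p : ℝ × ℝ) : R3 :=
  (norm3 (xj f ν h ν₁ ε p))⁻¹ • xj f ν h ν₁ ε p

/-- The limiting normal curvature κ_ν(u) = L̃(u,0). -/
def kν (f ν : ℝ × ℝ → R3) (u : ℝ) : ℝ := Lt f ν (u, 0)

/-- The cuspidal torsion κ_t(u) = M̃(u,0). -/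
def kt (h ν : ℝ × ℝ → R3) (u : ℝ) : ℝ := Mt h ν (u, 0)

/-- The bias r_b(u) = 3Ñ₁(u,0). -/
def rb (h ν₁ : ℝ × ℝ → R3) (u : ℝ) : ℝ := 3 * Nt1 h ν₁ (u, 0)

/-- The secondary cuspidal curvature r_c(u) = 24((Ñ₁)_v − 2F̃_vM̃ − G̃_vÑ₁)(u,0). -/
def rc (f ν h ν₁ : ℝ × ℝ → R3) (u : ℝ) : ℝ :=
  24 * (pv (Nt1 h ν₁) (u, 0) - 2 * pv (Ft f h) (u, 0) * Mt h ν (u, 0) -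
    pv (Gt h) (u, 0) * Nt1 h ν₁ (u, 0))

/-- The singular curvature κ_s(u) = ⟨f_uu, h⟩(u,0). -/
def ks (f h : ℝ × ℝ → R3) (u : ℝ) : ℝ := dot3 (pu (pu f) (u, 0)) (h (u, 0))

/-- The rank of the differential of `F` at `p`. -/
def rankAt (F : ℝ × ℝ → R3) (p : ℝ × ℝ) : ℕ :=
  Module.finrank ℝ (LinearMap.range (fderiv ℝ F p).toLinearMap)

theorem aux_pu {E : Type*} [NormedAddCommGroup E] [NormedSpace ℝ E] {F : ℝ × ℝ → E}
    (hF : ContDiff ℝ (⊤ : ℕ∞) F) : ContDiff ℝ (⊤ : ℕ∞) (pu F) := by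
  unfold pu
  exact (hF.fderiv_right (m := (⊤ : ℕ∞)) (by simp)).clm_apply contDiff_const

theorem aux_pv {E : Type*} [NormedAddCommGroup E] [NormedSpace ℝ E] {F : ℝ × ℝ → E}
    (hF : ContDiff ℝ (⊤ : ℕ∞) F) : ContDiff ℝ (⊤ : ℕ∞) (pv F) := by
  unfold pv
  exact (hF.fderiv_right (m := (⊤ : ℕ∞)) (by simp)).clm_apply contDiff_const

theorem aux_dot {a b : ℝ × ℝ → R3} (ha : ContDiff ℝ (⊤ : ℕ∞) a) (hb : ContDiff ℝ (⊤ : ℕ∞) b) :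
    ContDiff ℝ (⊤ : ℕ∞) (fun p => dot3 (a p) (b p)) := by
  have ha' := contDiff_pi.1 ha
  have hb' := contDiff_pi.1 hb
  unfold dot3
  exact (((ha' 0).mul (hb' 0)).add ((ha' 1).mul (hb' 1))).add ((ha' 2).mul (hb' 2))

/-- if κ_t(0) ≠ 0, 0 is a non-degenerate singular point of C_j and a
V_j-ridge point, then 0 is an at least second order V_j-ridge point of f iff
∂_v(V_jρ_j)(0) = 0, i.e. iff the tangent direction of the singular curve of C_j at 0
is the null direction ∂_v (0 is a singular point of the second kind of C_j). -/
theorem stmt_15 (f ν h ν₁ : ℝ × ℝ → R3) (H : AdaptedPureFrontal f ν h ν₁)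
    (ε : ℝ) (hε : ε = 1 ∨ ε = -1)
    (hHK : ∀ p : ℝ × ℝ, Hm f ν h ν₁ p ^ 2 - Kg f ν h ν₁ p > 0)
    (hκ : ∀ p : ℝ × ℝ, kap f ν h ν₁ ε p ≠ 0)
    (hkt : kt h ν 0 ≠ 0)
    (hsing : VD f ν h ν₁ ε (rho f ν h ν₁ ε) 0 = 0)
    (hnd : pu (VD f ν h ν₁ ε (rho f ν h ν₁ ε)) 0 ≠ 0 ∨
      pv (VD f ν h ν₁ ε (rho f ν h ν₁ ε)) 0 ≠ 0)
    (hridge : VD f ν h ν₁ ε (kap f ν h ν₁ ε) 0 = 0) :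
    VD f ν h ν₁ ε (VD f ν h ν₁ ε (kap f ν h ν₁ ε)) 0 = 0 ↔
      pv (VD f ν h ν₁ ε (rho f ν h ν₁ ε)) 0 = 0 := by
  have hpf := aux_pu H.smooth_f
  have hpν := aux_pu H.smooth_ν
  have hE : ContDiff ℝ (⊤ : ℕ∞) (Et f) := aux_dot hpf hpf
  have hF : ContDiff ℝ (⊤ : ℕ∞) (Ft f h) := aux_dot hpf H.smooth_h
  have hG : ContDiff ℝ (⊤ : ℕ∞) (Gt h) := aux_dot H.smooth_h H.smooth_h
  have hL : ContDiff ℝ (⊤ : ℕ∞) (Lt f ν) := (aux_dot hpf hpν).neg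
  have hM : ContDiff ℝ (⊤ : ℕ∞) (Mt h ν) := (aux_dot H.smooth_h hpν).neg
  have hN : ContDiff ℝ (⊤ : ℕ∞) (Nt1 h ν₁) := (aux_dot H.smooth_h H.smooth_ν₁).neg
  have hD0 : ∀ p, Et f p * Gt h p - Ft f h p ^ 2 ≠ 0 := by
    intro p h0
    have := hHK p
    simp [Hm, Kg, h0] at this
  have hD : ContDiff ℝ (⊤ : ℕ∞) (fun p => Et f p * Gt h p - Ft f h p ^ 2) :=
    (hE.mul hG).sub (hF.pow 2)
  have hK : ContDiff ℝ (⊤ : ℕ∞) (Kg f ν h ν₁) :=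
    ((hL.mul hN).sub (hM.pow 2)).div hD hD0
  have hH : ContDiff ℝ (⊤ : ℕ∞) (Hm f ν h ν₁) :=
    (((hE.mul hN).sub ((contDiff_const.mul hF).mul hM)).add (hG.mul hL)).div
      (contDiff_const.mul hD) (fun p => mul_ne_zero two_ne_zero (hD0 p))
  have hk : ContDiff ℝ (⊤ : ℕ∞) (kap f ν h ν₁ ε) :=
    hH.add (contDiff_const.mul (((hH.pow 2).sub hK).sqrt (fun p => (hHK p).ne')))
  have hV1 : ContDiff ℝ (⊤ : ℕ∞) (V1c f ν h ν₁ ε) :=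
    (contDiff_snd.mul (hM.sub (hk.mul hF))).neg
  have hV2 : ContDiff ℝ (⊤ : ℕ∞) (V2c f ν h ν₁ ε) := hL.sub (hk.mul hE)
  have hVk : ContDiff ℝ (⊤ : ℕ∞) (VD f ν h ν₁ ε (kap f ν h ν₁ ε)) :=
    (hV1.smul (aux_pu hk)).add (hV2.smul (aux_pv hk))
  have hdk : Differentiable ℝ (kap f ν h ν₁ ε) := hk.differentiable (by simp)
  have hrho : ∀ p, HasFDerivAt (rho f ν h ν₁ ε)
      ((-(kap f ν h ν₁ ε p ^ 2)⁻¹) • fderiv ℝ (kap f ν h ν₁ ε) p) p := fun p =>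
    (hasDerivAt_inv (hκ p)).comp_hasFDerivAt p (hdk p).hasFDerivAt
  have hVr : VD f ν h ν₁ ε (rho f ν h ν₁ ε) =
      fun p => (-(kap f ν h ν₁ ε p ^ 2)⁻¹) * VD f ν h ν₁ ε (kap f ν h ν₁ ε) p := by
    funext p
    simp only [VD, pu, pv, (hrho p).fderiv, ContinuousLinearMap.smul_apply, smul_eq_mul]
    ring
  have hc : ContDiff ℝ (⊤ : ℕ∞) (fun p => -(kap f ν h ν₁ ε p ^ 2)⁻¹) :=
    ((hk.pow 2).inv (fun p => pow_ne_zero 2 (hκ p))).neg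
  have hpvr : pv (VD f ν h ν₁ ε (rho f ν h ν₁ ε)) 0 =
      (-(kap f ν h ν₁ ε 0 ^ 2)⁻¹) * pv (VD f ν h ν₁ ε (kap f ν h ν₁ ε)) 0 := by
    rw [hVr]
    have := ((hc.differentiable (by simp)) 0).hasFDerivAt.mul
      ((hVk.differentiable (by simp)) 0).hasFDerivAt
    unfold pv
    erw [this.fderiv]
    simp [hridge]
  have e1 : Et f 0 = 1 := H.adapted_fu 0
  have e2 : Gt h 0 = 1 := H.adapted_h 0
  have e3 : Ft f h 0 = 0 := H.adapted_fu_h 0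
  have hM0 : Mt h ν 0 ≠ 0 := hkt
  have hquad : (kap f ν h ν₁ ε 0 - Hm f ν h ν₁ 0) ^ 2 =
      Hm f ν h ν₁ 0 ^ 2 - Kg f ν h ν₁ 0 := by
    have hs := Real.sq_sqrt (hHK 0).le
    have hε2 : ε ^ 2 = 1 := by rcases hε with rfl | rfl <;> norm_num
    have : kap f ν h ν₁ ε 0 - Hm f ν h ν₁ 0 =
      ε * Real.sqrt (Hm f ν h ν₁ 0 ^ 2 - Kg f ν h ν₁ 0) := by unfold kap; ring
    rw [this, mul_pow, hε2, hs, one_mul]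
  have hV20 : V2c f ν h ν₁ ε 0 ≠ 0 := by
    intro h0
    have hkL : kap f ν h ν₁ ε 0 = Lt f ν 0 := by
      simp only [V2c, e1] at h0
      linarith
    rw [hkL] at hquad
    simp only [Hm, Kg, e1, e2, e3] at hquad
    apply hM0
    have : Mt h ν 0 ^ 2 = 0 := by
      norm_num at hquad
      linarith
    exact pow_eq_zero_iff two_ne_zero |>.1 this
  have hV10 : V1c f ν h ν₁ ε 0 = 0 := by simp [V1c]
  have hVV : VD f ν h ν₁ ε (VD f ν h ν₁ ε (kap f ν h ν₁ ε)) 0 =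
      V2c f ν h ν₁ ε 0 * pv (VD f ν h ν₁ ε (kap f ν h ν₁ ε)) 0 := by
    conv_lhs => unfold VD
    rw [hV10, zero_smul, zero_add, smul_eq_mul]
    rfl
  rw [hVV, hpvr]
  have hk0 : -(kap f ν h ν₁ ε 0 ^ 2)⁻¹ ≠ 0 :=
    neg_ne_zero.2 (inv_ne_zero (pow_ne_zero 2 (hκ 0)))
  simp only [mul_eq_zero, hV20, hk0, false_or]
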